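/- Generalized Implicit Function Theorem: Let (X,‖·‖) be a Banach space, X' ⊂ X a linear subspace with a complete norm ‖·‖' such that the inclusion (X',‖·‖') ↪ (X,‖·‖) is continuous and the closed unit ball of X' is closed in X. Let 𝓜 be a Banach manifold, f ∈ 𝓜, 𝓤 ⊂ X open containing 0, and Ψ : 𝓜 × 𝓤 → X a C¹ map with Ψ(f,0) = 0 and Ψ(𝓜 × (𝓤 ∩ X')) ⊂ X'. Let A = D₂Ψ(f,0). Assume: (1) A(X') ⊂ X'; (2) 1 - A has a continuous linear right inverse J on X which maps X' into X' and restricts to a bounded operator on (X',‖·‖'); (3) for every ε > 0 there are neighborhoods 𝓜_ε of f and 𝓤_ε of 0 such that ‖Ψ(g,x) - A(x)‖' ≤ ε(1 + ‖x‖') for all g ∈ 𝓜_ε, x ∈ 𝓤_ε ∩ X'. Then for any neighborhood 𝓥 ⊂ X' of 0 in (X',‖·‖'), there exist a neighborhood 𝓝 of f in 𝓜 and a map c : 𝓝 → 𝓥 with c(f) = 0, Ψ(g, c(g)) = c(g) for all g ∈ 𝓝, and c is C¹ as a map 𝓝 → X. -/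

import Mathlib

open Filter Topology Set

/-- If `y` is a family of fixed points of `Φ (x, ·)` which is Lipschitz at `x`, and `B` is a left
inverse of `1 - D₂Φ`, then `y` is differentiable at `x` with derivative `B ∘ D₁Φ`. -/
theorem hasFDerivAt_of_eventually_fixedPoint {E F : Type*} [NormedAddCommGroup E]
    [NormedSpace ℝ E] [NormedAddCommGroup F] [NormedSpace ℝ F] {Φ : E × F → F} {y : E → F} {x : E}
    {L : E × F →L[ℝ] F} {B : F →L[ℝ] F} (hΦ : HasFDerivAt Φ L (x, y x))
    (hfix : ∀ᶠ z in 𝓝 x, Φ (z, y z) = y z)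
    (hy : (fun z => y z - y x) =O[𝓝 x] fun z => z - x)
    (hB : B * (1 - L.comp (ContinuousLinearMap.inr ℝ E F)) = 1) :
    HasFDerivAt y (B.comp (L.comp (ContinuousLinearMap.inl ℝ E F))) x := by
  have hcont : Tendsto (fun z => (z, y z)) (𝓝 x) (𝓝 (x, y x)) := by
    refine tendsto_id.prodMk_nhds ?_
    have h : Tendsto (fun z => z - x) (𝓝 x) (𝓝 0) :=
      tendsto_sub_nhds_zero_iff.2 tendsto_id
    exact tendsto_sub_nhds_zero_iff.1 (hy.trans_tendsto h)
  have hbig : (fun z => (z, y z) - (x, y x)) =O[𝓝 x] fun z => z - x := by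
    simpa only [Prod.mk_sub_mk] using (Asymptotics.isBigO_refl _ _).prod_left hy
  have hlit := (hΦ.isLittleO.comp_tendsto hcont).trans_isBigO hbig
  refine HasFDerivAt.of_isLittleO (((B.isBigO_comp _ _).trans_isLittleO hlit).congr' ?_ .rfl)
  filter_upwards [hfix] with z hz
  have hfx : Φ (x, y x) = y x := hfix.self_of_nhds
  have hsplit : L (z - x, y z - y x) = L (z - x, 0) + L (0, y z - y x) := by
    rw [← map_add]; simp
  have hBd : B (y z - y x - L (0, y z - y x)) = y z - y x := by
    simpa using congrArg (fun T : F →L[ℝ] F => T (y z - y x)) hB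
  have key : y z - y x - L (z - x, y z - y x)
      = (y z - y x - L (0, y z - y x)) - L (z - x, 0) := by rw [hsplit]; abel
  simp only [Function.comp_apply, Prod.mk_sub_mk, hz, hfx, key]
  rw [map_sub B _ (L (z - x, 0)), hBd]
  simp

/-- A `C¹` family of maps `Φ (x, ·)` with a fixed point `b` at `x = a` at which the partial
derivative vanishes has a `C¹` family of fixed points near `a`. The fixed points lie in any closed
set containing `b` which is locally preserved by `Φ`. -/
theorem exists_contDiffOn_fixedPoint {E F : Type*} [NormedAddCommGroup E] [NormedSpace ℝ E]
    [NormedAddCommGroup F] [NormedSpace ℝ F] [CompleteSpace F] {Φ : E × F → F} {a : E} {b : F}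
    (hΦ : ContDiffAt ℝ 1 Φ (a, b)) (hab : Φ (a, b) = b)
    (hpart : (fderiv ℝ Φ (a, b)).comp (ContinuousLinearMap.inr ℝ E F) = 0)
    {S : Set F} (hS : IsClosed S) (hbS : b ∈ S)
    (hmaps : ∀ᶠ p in 𝓝 (a, b), p.2 ∈ S → Φ p ∈ S) :
    ∃ (N : Set E) (y : E → F), IsOpen N ∧ a ∈ N ∧ y a = b ∧
      (∀ x ∈ N, y x ∈ S ∧ Φ (x, y x) = y x) ∧ ContDiffOn ℝ 1 y N := by
  set L := fderiv ℝ Φ (a, b) with hL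
  set K : ℝ := ‖L‖ + 1 / 2 with hK
  have hK0 : 0 < K := by positivity
  have hstrict : HasStrictFDerivAt Φ L (a, b) := hΦ.hasStrictFDerivAt one_ne_zero
  have hest := hstrict.isLittleO.bound (show (0 : ℝ) < 1 / 2 by norm_num)
  obtain ⟨T, hTopen, habT, hT⟩ := exists_nhds_square hest
  have hnorm : ∀ᶠ p in 𝓝 (a, b),
      ‖(fderiv ℝ Φ p).comp (ContinuousLinearMap.inr ℝ E F)‖ < 1 := by
    have hc : ContinuousAt (fun p => (fderiv ℝ Φ p).comp (ContinuousLinearMap.inr ℝ E F)) (a, b) :=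
      (hΦ.continuousAt_fderiv one_ne_zero).clm_comp continuousAt_const
    refine hc.norm.eventually_lt_const ?_
    simp only [← hL, hpart, norm_zero, zero_lt_one]
  have hall : ∀ᶠ p in 𝓝 (a, b), p ∈ T ∧ (p.2 ∈ S → Φ p ∈ S) ∧ ContDiffAt ℝ 1 Φ p ∧
      ‖(fderiv ℝ Φ p).comp (ContinuousLinearMap.inr ℝ E F)‖ < 1 := by
    filter_upwards [hTopen.mem_nhds habT, hmaps, hΦ.eventually (by simp), hnorm]
      with p h1 h2 h3 h4 using ⟨h1, h2, h3, h4⟩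
  obtain ⟨ρ, hρ, hρall⟩ := Metric.nhds_basis_closedBall.eventually_iff.1 hall
  have hmem : ∀ {x z}, ‖x - a‖ ≤ ρ → ‖z - b‖ ≤ ρ → (x, z) ∈ Metric.closedBall (a, b) ρ := by
    intro x z hx hz
    rw [← closedBall_prod_same]
    exact ⟨by simpa [dist_eq_norm] using hx, by simpa [dist_eq_norm] using hz⟩
  have hlip : ∀ {x x' z z'}, ‖x - a‖ ≤ ρ → ‖x' - a‖ ≤ ρ → ‖z - b‖ ≤ ρ → ‖z' - b‖ ≤ ρ →
      ‖Φ (x, z) - Φ (x', z')‖ ≤ K * ‖x - x'‖ + 1 / 2 * ‖z - z'‖ := by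
    intro x x' z z' hx hx' hz hz'
    have h := hT (mk_mem_prod (hρall (hmem hx hz)).1 (hρall (hmem hx' hz')).1)
    simp only [mem_ofPred_eq, Prod.mk_sub_mk] at h
    have hLeq : L (x - x', z - z') = L (x - x', 0) := by
      have h0 : L (0, z - z') = 0 := by
        simpa using congrArg (fun T : F →L[ℝ] F => T (z - z')) hpart
      have h1 : L (x - x', z - z') = L (x - x', 0) + L (0, z - z') := by
        rw [← map_add]; simp
      rw [h1, h0, add_zero]
    have hLn : ‖L (x - x', 0)‖ ≤ ‖L‖ * ‖x - x'‖ := by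
      simpa [Prod.norm_def] using L.le_opNorm (x - x', 0)
    have hpn : ‖(x - x', z - z')‖ ≤ ‖x - x'‖ + ‖z - z'‖ :=
      max_le_add_of_nonneg (norm_nonneg _) (norm_nonneg _)
    have htri := norm_add_le (Φ (x, z) - Φ (x', z') - L (x - x', z - z')) (L (x - x', z - z'))
    rw [sub_add_cancel] at htri
    rw [hLeq] at htri h
    rw [hK]
    linarith
  set η : ℝ := min ρ (ρ / (2 * K)) with hη
  have hη0 : 0 < η := lt_min hρ (by positivity)
  have hηK : K * η ≤ ρ / 2 := by
    calc K * η ≤ K * (ρ / (2 * K)) := by gcongr; exact min_le_right _ _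
      _ = ρ / 2 := by field_simp
  have hNρ : ∀ {x}, x ∈ Metric.ball a η → ‖x - a‖ ≤ ρ := by
    intro x hx
    rw [mem_ball_iff_norm] at hx
    exact hx.le.trans (min_le_left _ _)
  have hex : ∀ x ∈ Metric.ball a η, ∃ z, ‖z - b‖ ≤ ρ ∧ z ∈ S ∧ Φ (x, z) = z := by
    intro x hx
    have hxη : ‖x - a‖ ≤ η := by
      rw [mem_ball_iff_norm] at hx
      exact hx.le
    set s : Set F := Metric.closedBall b ρ ∩ S
    have hsc : IsComplete s := (Metric.isClosed_closedBall.inter hS).isComplete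
    have hsf : MapsTo (fun z => Φ (x, z)) s s := by
      rintro z ⟨hz, hzS⟩
      rw [mem_closedBall_iff_norm] at hz
      refine ⟨?_, (hρall (hmem (hNρ hx) hz)).2.1 hzS⟩
      have h := hlip (hNρ hx) (x' := a) (by simpa using hρ.le) hz (z' := b) (by simpa using hρ.le)
      rw [hab] at h
      rw [mem_closedBall_iff_norm]
      have : K * ‖x - a‖ ≤ K * η := by gcongr
      linarith
    have hcontr : ContractingWith (1 / 2) (hsf.restrict _ s s) := by
      refine ⟨by norm_num, LipschitzWith.of_dist_le_mul ?_⟩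
      rintro ⟨z, hz, -⟩ ⟨z', hz', -⟩
      rw [mem_closedBall_iff_norm] at hz hz'
      have h := hlip (hNρ hx) (hNρ hx) hz hz'
      simpa [Subtype.dist_eq, dist_eq_norm] using h
    obtain ⟨z, hz, hfz, -⟩ := ContractingWith.exists_fixedPoint' hsc hsf hcontr (x := b)
      ⟨Metric.mem_closedBall_self hρ.le, hbS⟩ (edist_ne_top _ _)
    exact ⟨z, mem_closedBall_iff_norm.1 hz.1, hz.2, hfz⟩
  choose! y hyρ hyS hyfix using hex
  have hydist : ∀ x ∈ Metric.ball a η, ∀ x' ∈ Metric.ball a η,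
      ‖y x - y x'‖ ≤ 2 * K * ‖x - x'‖ := by
    intro x hx x' hx'
    have h := hlip (hNρ hx) (hNρ hx') (hyρ x hx) (hyρ x' hx')
    rw [hyfix x hx, hyfix x' hx'] at h
    linarith
  have ha : a ∈ Metric.ball a η := Metric.mem_ball_self hη0
  refine ⟨Metric.ball a η, y, Metric.isOpen_ball, ha, ?_, fun x hx => ⟨hyS x hx, hyfix x hx⟩, ?_⟩
  · have h := hlip (hNρ ha) (hNρ ha) (hyρ a ha) (z' := b) (by simpa using hρ.le)
    rw [hyfix a ha, hab] at h
    simp only [sub_self, norm_zero, mul_zero, zero_add] at h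
    rw [← sub_eq_zero, ← norm_le_zero_iff]
    linarith
  set P : E → F →L[ℝ] F := fun x =>
    1 - (fderiv ℝ Φ (x, y x)).comp (ContinuousLinearMap.inr ℝ E F)
  have hunit : ∀ x ∈ Metric.ball a η, IsUnit (P x) := fun x hx =>
    isUnit_one_sub_of_norm_lt_one (hρall (hmem (hNρ hx) (hyρ x hx))).2.2.2
  have hC1 : ∀ x ∈ Metric.ball a η, ContDiffAt ℝ 1 Φ (x, y x) := fun x hx =>
    (hρall (hmem (hNρ hx) (hyρ x hx))).2.2.1
  have hyO : ∀ x ∈ Metric.ball a η, (fun z => y z - y x) =O[𝓝 x] fun z => z - x := by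
    intro x hx
    refine Asymptotics.IsBigO.of_bound (2 * K) ?_
    filter_upwards [Metric.isOpen_ball.mem_nhds hx] with z hz using hydist z hz x hx
  have hderiv : ∀ x ∈ Metric.ball a η, HasFDerivAt y ((Ring.inverse (P x)).comp
      ((fderiv ℝ Φ (x, y x)).comp (ContinuousLinearMap.inl ℝ E F))) x := by
    intro x hx
    refine hasFDerivAt_of_eventually_fixedPoint
      ((hC1 x hx).differentiableAt one_ne_zero).hasFDerivAt ?_ (hyO x hx)
      (Ring.inverse_mul_cancel _ (hunit x hx))
    filter_upwards [Metric.isOpen_ball.mem_nhds hx] with z hz using hyfix z hz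
  intro x hx
  refine (contDiffAt_one_iff.2 ⟨_, Metric.ball a η, Metric.isOpen_ball.mem_nhds hx, ?_,
    hderiv⟩).contDiffWithinAt
  intro z hz
  have hyc : ContinuousAt y z := (hderiv z hz).continuousAt
  have hfc : ContinuousAt (fun w => fderiv ℝ Φ (w, y w)) z :=
    ContinuousAt.comp (f := fun w => (w, y w)) (g := fderiv ℝ Φ)
      ((hC1 z hz).continuousAt_fderiv one_ne_zero) (continuousAt_id.prodMk hyc)
  have hPc : ContinuousAt P z := continuousAt_const.sub (hfc.clm_comp continuousAt_const)
  have hinv : ContinuousAt (fun w => Ring.inverse (P w)) z := by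
    obtain ⟨u, hu⟩ := hunit z hz
    refine ContinuousAt.comp (g := Ring.inverse) (f := P) ?_ hPc
    rw [← hu]
    exact NormedRing.inverse_continuousAt u
  exact (hinv.clm_comp (hfc.clm_comp continuousAt_const)).continuousWithinAt


theorem stmt7 {X G : Type*} [NormedAddCommGroup X] [NormedSpace ℝ X] [CompleteSpace X]
    [NormedAddCommGroup G] [NormedSpace ℝ G]
    (X' : Submodule ℝ X) (norm' : X → ℝ)
    -- `norm'` is a norm on `X'`
    (h0 : norm' 0 = 0)
    (hpos : ∀ x ∈ X', x ≠ 0 → 0 < norm' x)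
    (hsmul : ∀ (c : ℝ), ∀ x ∈ X', norm' (c • x) = |c| * norm' x)
    (htri : ∀ x ∈ X', ∀ y ∈ X', norm' (x + y) ≤ norm' x + norm' y)
    -- `(X', norm')` is complete
    (hcomplete : ∀ u : ℕ → X, (∀ n, u n ∈ X') →
      (∀ ε : ℝ, 0 < ε → ∃ K : ℕ, ∀ m n : ℕ, K ≤ m → K ≤ n → norm' (u m - u n) < ε) →
      ∃ x ∈ X', Filter.Tendsto (fun n => norm' (u n - x)) Filter.atTop (nhds 0))
    -- the inclusion `(X', norm') ↪ (X, ‖·‖)` is continuous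
    (Ci : ℝ) (hCi : ∀ x ∈ X', ‖x‖ ≤ Ci * norm' x)
    -- the closed unit ball of `X'` is closed in `X`
    (hball : IsClosed {x : X | x ∈ X' ∧ norm' x ≤ 1})
    (f : G) (U : Set X) (hUopen : IsOpen U) (hU0 : (0 : X) ∈ U)
    (Ψ : G × X → X)
    (hΨC1 : ContDiffOn ℝ 1 Ψ (Set.univ ×ˢ U))
    (hΨf0 : Ψ (f, 0) = 0)
    (hΨX' : ∀ g : G, ∀ x ∈ U, x ∈ X' → Ψ (g, x) ∈ X')
    (A : X →L[ℝ] X)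
    (hA : HasFDerivAt (fun x => Ψ (f, x)) A 0)
    (hAX' : ∀ x ∈ X', A x ∈ X')
    (J : X →L[ℝ] X)
    (hJ : ∀ x : X, J x - A (J x) = x)
    (hJX' : ∀ x ∈ X', J x ∈ X')
    (CJ : ℝ) (hCJ : ∀ x ∈ X', norm' (J x) ≤ CJ * norm' x)
    (hsmall : ∀ ε : ℝ, 0 < ε → ∃ (Mε : Set G) (Uε : Set X), IsOpen Mε ∧ f ∈ Mε ∧
      IsOpen Uε ∧ (0 : X) ∈ Uε ∧ Uε ⊆ U ∧
      ∀ g ∈ Mε, ∀ x ∈ Uε, x ∈ X' → norm' (Ψ (g, x) - A x) ≤ ε * (1 + norm' x))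
    (V : Set X) (hVX' : V ⊆ (X' : Set X))
    (hV : ∃ δ : ℝ, 0 < δ ∧ ∀ x ∈ X', norm' x ≤ δ → x ∈ V) :
    ∃ (Nf : Set G) (c : G → X), IsOpen Nf ∧ f ∈ Nf ∧ c f = 0 ∧
      (∀ g ∈ Nf, c g ∈ V ∧ Ψ (g, c g) = c g) ∧
      ContDiffOn ℝ 1 c Nf := by
  obtain ⟨δ, hδ, hδV⟩ := hV
  have hnonneg : ∀ x ∈ X', 0 ≤ norm' x := by
    intro x hx
    rcases eq_or_ne x 0 with rfl | hne
    · exact h0.ge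
    · exact (hpos x hx hne).le
  set r : ℝ := δ / (1 + |CJ|) with hr
  have hr0 : 0 < r := by positivity
  have hJr : ∀ x ∈ X', norm' x ≤ r → norm' (J x) ≤ δ := by
    intro x hx hxr
    calc norm' (J x) ≤ CJ * norm' x := hCJ x hx
      _ ≤ (1 + |CJ|) * r := by
        have := le_abs_self CJ
        exact mul_le_mul (by linarith) hxr (hnonneg x hx) (by positivity)
      _ = δ := by rw [hr]; field_simp
  obtain ⟨M, W, hMo, hfM, hWo, h0W, hWU, hMW⟩ := hsmall (r / (1 + δ)) (by positivity)
  set Φ : G × X → X := fun p => Ψ (p.1, J p.2) - A (J p.2) with hΦdef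
  have hΨat : ContDiffAt ℝ 1 Ψ (f, 0) :=
    hΨC1.contDiffAt ((isOpen_univ.prod hUopen).mem_nhds ⟨mem_univ _, hU0⟩)
  have hΦC1 : ContDiffAt ℝ 1 Φ (f, 0) := by
    refine ContDiffAt.sub ?_ (A.contDiff.comp (J.contDiff.comp contDiff_snd)).contDiffAt
    refine ContDiffAt.comp (g := Ψ) (f := fun p : G × X => (p.1, J p.2)) _ ?_
      (contDiff_fst.prodMk (J.contDiff.comp contDiff_snd)).contDiffAt
    simpa using hΨat
  have hpart : (fderiv ℝ Φ (f, 0)).comp (ContinuousLinearMap.inr ℝ G X) = 0 := by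
    have h1 : HasFDerivAt (fun z => Φ (f, z))
        ((fderiv ℝ Φ (f, 0)).comp (ContinuousLinearMap.inr ℝ G X)) 0 :=
      (hΦC1.differentiableAt one_ne_zero).hasFDerivAt.comp (0 : X)
        (hasFDerivAt_prodMk_right f (0 : X))
    have h2 : HasFDerivAt (fun z => Φ (f, z)) (A.comp J - A.comp J) 0 := by
      refine HasFDerivAt.sub ?_ (A.comp J).hasFDerivAt
      refine HasFDerivAt.comp (g := fun x => Ψ (f, x)) (f := J) (0 : X) ?_ J.hasFDerivAt
      simpa using hA
    rw [h1.unique h2, sub_self]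
  set S : Set X := {x | x ∈ X' ∧ norm' x ≤ r} with hSdef
  have hS : IsClosed S := by
    have hpre : S = (fun x : X => r⁻¹ • x) ⁻¹' {x : X | x ∈ X' ∧ norm' x ≤ 1} := by
      ext x
      simp only [hSdef, mem_preimage, mem_ofPred_eq, X'.smul_mem_iff (inv_ne_zero hr0.ne')]
      refine and_congr_right fun hx => ?_
      rw [hsmul _ x hx, abs_of_pos (inv_pos.2 hr0), inv_mul_le_iff₀ hr0, mul_one]
    rw [hpre]
    exact hball.preimage (continuous_const_smul _)
  have hmaps : ∀ᶠ p in 𝓝 (f, (0 : X)), p.2 ∈ S → Φ p ∈ S := by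
    have hM : ∀ᶠ p : G × X in 𝓝 (f, (0 : X)), p.1 ∈ M :=
      continuous_fst.continuousAt.eventually (hMo.mem_nhds hfM)
    have hW : ∀ᶠ p : G × X in 𝓝 (f, (0 : X)), J p.2 ∈ W :=
      (J.continuous.comp continuous_snd).continuousAt.eventually
        (hWo.mem_nhds (by simpa using h0W))
    filter_upwards [hM, hW] with p hpM hpW
    rintro ⟨hpX', hpr⟩
    have hJp := hJX' _ hpX'
    refine ⟨X'.sub_mem (hΨX' _ _ (hWU hpW) hJp) (hAX' _ hJp), ?_⟩
    calc norm' (Φ p) ≤ r / (1 + δ) * (1 + norm' (J p.2)) := hMW _ hpM _ hpW hJp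
      _ ≤ r / (1 + δ) * (1 + δ) := by gcongr; exact hJr _ hpX' hpr
      _ = r := by field_simp
  obtain ⟨N, y, hN, hfN, hyf, hy, hyC1⟩ := exists_contDiffOn_fixedPoint hΦC1
    (by simp [hΦdef, hΨf0]) hpart hS ⟨X'.zero_mem, by rw [h0]; exact hr0.le⟩ hmaps
  refine ⟨N, fun g => J (y g), hN, hfN, by simp [hyf], fun g hg => ?_,
    J.contDiff.comp_contDiffOn hyC1⟩
  obtain ⟨⟨hyX', hyr⟩, hfix⟩ := hy g hg
  refine ⟨hδV _ (hJX' _ hyX') (hJr _ hyX' hyr), ?_⟩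
  have hfix' : Ψ (g, J (y g)) - A (J (y g)) = y g := hfix
  exact sub_left_injective (hfix'.trans (hJ (y g)).symm)
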